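/- Let n, k, ℓ be integers with 0 ≤ ℓ < k ≤ n/2 and let p be a prime. Let φ ∈ ℤ[x] be a monic polynomial whose reduction modulo p is irreducible in 𝔽_p[x]. Let f ∈ ℤ[x] be a monic polynomial not divisible by φ(x) in ℤ[x], with φ-expansion f = Σ_{i=0}^{n} f_i(x)·φ(x)^i and f_n(x) ≠ 0. Assume: (1) v_p^x(f_i) > 0 (i.e., p divides every coefficient of f_i) for all 0 ≤ i ≤ n−ℓ−1; (2) f_0 ≠ 0 and for every index j with 1 ≤ j ≤ n and f_j ≠ 0 one has k·(v_p^x(f_0) − v_p^x(f_j)) < j (i.e., the right-most edge of the φ-Newton polygon of f with respect to p has slope less than 1/k). Let a_0(x), …, a_n(x) ∈ ℤ[x] satisfy: (i) deg a_i < deg φ − deg f_i for 0 ≤ i ≤ n; (ii) v_p^x(a_0) = 0, i.e., p does not divide the content of a_0; (iii) p does not divide the leading coefficient of a_n. Then the polynomial Σ_{i=0}^{n} a_i(x)·f_i(x)·φ(x)^i has no factor in ℤ[x] whose degree lies in the interval [(ℓ+1)·deg φ, (k+1)·deg φ). -/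

import Mathlib

open Polynomial

/-- The Gaussian valuation `v_p^x` of a polynomial over `ℤ`: the minimum of the
`p`-adic valuations of its coefficients, realized as the largest `m` such that
`p^m` divides every coefficient. -/
noncomputable def vpx (p : ℕ) (g : ℤ[X]) : ℕ :=
  sSup {m : ℕ | ∀ j, (p : ℤ) ^ m ∣ g.coeff j}

/-!
Measure polynomials by their `φ`-Newton polygons, with points `(i, v_p^x(f_i))`. Two supporting
lines of the same slope `-1/k` touch the polygons of `g` and `h` in last points with abscissae `I`
and `J`. Since `φ` is irreducible modulo `p`, remainders modulo `φ` of products of small-degree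
polynomials have additive valuation, and every other contribution to the coefficient of
`φ ^ (I + J)` in `g * h` has larger valuation; so that coefficient has valuation
`v_p^x(g_I) + v_p^x(h_J)`.

If `g * h` is the polynomial of the theorem and `deg g ≥ (ℓ + 1) deg φ`, then `φ` divides `g`
modulo `p`, because `h` has too small a degree to absorb the factor `φ ^ (n - ℓ)`. If moreover
`deg g < (k + 1) deg φ`, some `g_s` with `1 ≤ s ≤ k` is nonzero modulo `p` while `g_0` vanishes
modulo `p`, and this forces `I > 0`. Between the abscissae `0` and `I + J` the polygon of `g * h`
then descends at an average rate of at least `1/k`, against the hypothesis.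
-/

section Expansion

variable {R : Type*} [CommRing R] {φ : R[X]}

/-- The quotient of the division by a monic polynomial, as a linear map; the companion of
`Polynomial.modByMonicHom`. Like `/ₘ`, it is zero when `q` is not monic. -/
noncomputable def divByMonicHom (q : R[X]) : R[X] →ₗ[R] R[X] where
  toFun g := g /ₘ q
  map_add' g h := by
    nontriviality R
    by_cases hq : q.Monic
    · refine (div_modByMonic_unique _ (g %ₘ q + h %ₘ q) hq ⟨?_, ?_⟩).1
      · linear_combination modByMonic_add_div g q + modByMonic_add_div h q
      · exact (degree_add_le _ _).trans_lt
          (max_lt (degree_modByMonic_lt g hq) (degree_modByMonic_lt h hq))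
    · simp only [divByMonic_eq_of_not_monic _ hq, add_zero]
  map_smul' r g := by
    nontriviality R
    by_cases hq : q.Monic
    · refine (div_modByMonic_unique _ (r • (g %ₘ q)) hq ⟨?_, ?_⟩).1
      · rw [RingHom.id_apply, mul_smul_comm, ← smul_add, modByMonic_add_div]
      · exact (degree_smul_le _ _).trans_lt (degree_modByMonic_lt g hq)
    · simp only [divByMonic_eq_of_not_monic _ hq, smul_zero]

/-- The coefficient of `φ ^ i` in the `φ`-expansion of a polynomial, for `φ` monic. -/
noncomputable def expansionCoeff (φ : R[X]) (i : ℕ) : R[X] →ₗ[R] R[X] :=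
  modByMonicHom φ ∘ₗ divByMonicHom (φ ^ i)

lemma expansionCoeff_apply (φ : R[X]) (i : ℕ) (g : R[X]) :
    expansionCoeff φ i g = (g /ₘ φ ^ i) %ₘ φ :=
  rfl

lemma expansionCoeff_zero (φ g : R[X]) : expansionCoeff φ 0 g = g %ₘ φ := by
  rw [expansionCoeff_apply, pow_zero, divByMonic_one]

lemma degree_expansionCoeff_lt [Nontrivial R] (hφ : φ.Monic) (i : ℕ) (g : R[X]) :
    (expansionCoeff φ i g).degree < φ.degree :=
  degree_modByMonic_lt _ hφ

lemma expansionCoeff_mul_pow_self (hφ : φ.Monic) (i : ℕ) (g : R[X]) :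
    expansionCoeff φ i (g * φ ^ i) = g %ₘ φ := by
  rw [expansionCoeff_apply, mul_comm, mul_divByMonic_cancel_left _ (hφ.pow i)]

lemma expansionCoeff_mul_pow_of_lt (hφ : φ.Monic) {m i : ℕ} (hmi : m < i) (g : R[X]) :
    expansionCoeff φ m (g * φ ^ i) = 0 := by
  obtain ⟨j, rfl⟩ := Nat.exists_eq_add_of_lt hmi
  rw [show g * φ ^ (m + j + 1) = g * φ ^ j * φ * φ ^ m by ring, expansionCoeff_mul_pow_self hφ,
    mul_self_modByMonic hφ]

lemma degree_mul_pow_lt [Nontrivial R] (hφ : φ.Monic) {u : R[X]} (hu : u.degree < φ.degree)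
    (i : ℕ) : (u * φ ^ i).degree < (φ ^ (i + 1)).degree := by
  rw [(hφ.pow i).degree_mul, pow_succ', (hφ.pow i).degree_mul]
  exact WithBot.add_lt_add_right (degree_ne_bot.2 (hφ.pow i).ne_zero) hu

lemma degree_pow_le_degree_pow (hφ : φ.Monic) {i j : ℕ} (hij : i ≤ j) :
    (φ ^ i).degree ≤ (φ ^ j).degree := by
  nontriviality R
  rw [degree_eq_natDegree (hφ.pow i).ne_zero, degree_eq_natDegree (hφ.pow j).ne_zero,
    hφ.natDegree_pow, hφ.natDegree_pow]
  exact_mod_cast Nat.mul_le_mul_right _ hij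

lemma expansionCoeff_mul_pow_of_gt (hφ : φ.Monic) {m i : ℕ} (him : i < m) {u : R[X]}
    (hu : u.degree < φ.degree) : expansionCoeff φ m (u * φ ^ i) = 0 := by
  nontriviality R
  have hdeg : (u * φ ^ i).degree < (φ ^ m).degree :=
    (degree_mul_pow_lt hφ hu i).trans_le (degree_pow_le_degree_pow hφ him)
  rw [expansionCoeff_apply, (divByMonic_eq_zero_iff (hφ.pow m)).2 hdeg, zero_modByMonic]

lemma expansionCoeff_sum_mul_pow (hφ : φ.Monic) {N : ℕ} {b : ℕ → R[X]}
    (hb : ∀ i < N, (b i).degree < φ.degree) (m : ℕ) :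
    expansionCoeff φ m (∑ i ∈ Finset.range N, b i * φ ^ i) = if m < N then b m else 0 := by
  nontriviality R
  have single : ∀ i ∈ Finset.range N,
      expansionCoeff φ m (b i * φ ^ i) = if m = i then b i else 0 := by
    intro i hi
    have hbi := hb i (Finset.mem_range.1 hi)
    rcases lt_trichotomy m i with hmi | rfl | him
    · rw [expansionCoeff_mul_pow_of_lt hφ hmi, if_neg hmi.ne]
    · rw [expansionCoeff_mul_pow_self hφ, (modByMonic_eq_self_iff hφ).2 hbi, if_pos rfl]
    · rw [expansionCoeff_mul_pow_of_gt hφ him hbi, if_neg him.ne']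
  rw [map_sum, Finset.sum_congr rfl single, Finset.sum_ite_eq]
  simp only [Finset.mem_range]

lemma degree_sum_mul_pow_lt [Nontrivial R] (hφ : φ.Monic) {N : ℕ} {b : ℕ → R[X]}
    (hb : ∀ i < N, (b i).degree < φ.degree) :
    (∑ i ∈ Finset.range N, b i * φ ^ i).degree < (φ ^ N).degree := by
  have hbot : ⊥ < (φ ^ N).degree := bot_lt_iff_ne_bot.2 (degree_ne_bot.2 (hφ.pow N).ne_zero)
  refine (degree_sum_le _ _).trans_lt ((Finset.sup_lt_iff hbot).2 fun i hi => ?_)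
  have hiN := Finset.mem_range.1 hi
  exact (degree_mul_pow_lt hφ (hb i hiN) i).trans_le (degree_pow_le_degree_pow hφ hiN)

lemma sum_expansionCoeff_mul_pow (hφ : φ.Monic) (N : ℕ) (g : R[X]) :
    ∑ i ∈ Finset.range N, expansionCoeff φ i g * φ ^ i = g %ₘ φ ^ N := by
  nontriviality R
  induction N with
  | zero => simp
  | succ N ih =>
    refine (div_modByMonic_unique ((g /ₘ φ ^ N) /ₘ φ) _ (hφ.pow _) ⟨?_, ?_⟩).2.symm
    · rw [Finset.sum_range_succ, ih, expansionCoeff_apply]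
      linear_combination
        modByMonic_add_div g (φ ^ N) + φ ^ N * modByMonic_add_div (g /ₘ φ ^ N) φ
    · exact degree_sum_mul_pow_lt hφ fun i _ => degree_expansionCoeff_lt hφ i g

lemma sum_expansionCoeff_mul_pow_of_natDegree_lt (hφ : φ.Monic) {N : ℕ} {g : R[X]}
    (hg : g.natDegree < N * φ.natDegree) :
    ∑ i ∈ Finset.range N, expansionCoeff φ i g * φ ^ i = g := by
  nontriviality R
  rw [sum_expansionCoeff_mul_pow hφ, modByMonic_eq_self_iff (hφ.pow N)]
  exact degree_lt_degree (by rwa [hφ.natDegree_pow])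

lemma expansionCoeff_mul (hφ : φ.Monic) (m : ℕ) (g h : R[X]) :
    expansionCoeff φ m (g * h) =
      ∑ x ∈ Finset.range (m + 1) ×ˢ Finset.range (m + 1),
        expansionCoeff φ m (expansionCoeff φ x.1 g * expansionCoeff φ x.2 h * φ ^ (x.1 + x.2)) := by
  set N := m + 1
  have truncate : g * h = (g %ₘ φ ^ N) * (h %ₘ φ ^ N) +
      ((g /ₘ φ ^ N) * h + (g %ₘ φ ^ N) * (h /ₘ φ ^ N)) * φ ^ N := by
    linear_combination -h * modByMonic_add_div g (φ ^ N) -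
      (g %ₘ φ ^ N) * modByMonic_add_div h (φ ^ N)
  rw [truncate, map_add, expansionCoeff_mul_pow_of_lt hφ m.lt_succ_self, add_zero,
    ← sum_expansionCoeff_mul_pow hφ N g, ← sum_expansionCoeff_mul_pow hφ N h,
    Finset.sum_mul_sum, ← Finset.sum_product', map_sum]
  refine Finset.sum_congr rfl fun x _ => ?_
  rw [mul_mul_mul_comm, pow_add]

lemma leadingCoeff_sum_mul_pow (hφ : φ.Monic) {n : ℕ} {b : ℕ → R[X]}
    (hb : ∀ i < n, (b i).degree < φ.degree) (hbn : b n ≠ 0) :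
    (∑ i ∈ Finset.range (n + 1), b i * φ ^ i).leadingCoeff = (b n).leadingCoeff := by
  nontriviality R
  have hlt : (∑ i ∈ Finset.range n, b i * φ ^ i).degree < (b n * φ ^ n).degree := by
    refine (degree_sum_mul_pow_lt hφ hb).trans_le ?_
    rw [(hφ.pow n).degree_mul]
    exact le_add_of_nonneg_left (zero_le_degree_iff.2 hbn)
  rw [Finset.sum_range_succ, leadingCoeff_add_of_degree_lt hlt, leadingCoeff_mul_monic (hφ.pow n)]

lemma C_dvd_expansionCoeff (i : ℕ) {c : R} {g : R[X]} (h : C c ∣ g) :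
    C c ∣ expansionCoeff φ i g := by
  obtain ⟨q, rfl⟩ := h
  rw [← smul_eq_C_mul, map_smul, smul_eq_C_mul]
  exact dvd_mul_right _ _

lemma emultiplicity_le_emultiplicity_expansionCoeff (c : R) (i : ℕ) (g : R[X]) :
    emultiplicity (C c) g ≤ emultiplicity (C c) (expansionCoeff φ i g) := by
  refine emultiplicity_le_emultiplicity_iff.2 fun m hm => ?_
  rw [← C_pow] at hm ⊢
  exact C_dvd_expansionCoeff i hm

lemma exists_not_C_dvd_expansionCoeff (hφ : φ.Monic) {c : R} {N : ℕ} {g : R[X]}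
    (hg : g.natDegree < N * φ.natDegree) (hc : ¬ C c ∣ g) :
    ∃ i < N, ¬ C c ∣ expansionCoeff φ i g := by
  by_contra! hall
  rw [← sum_expansionCoeff_mul_pow_of_natDegree_lt hφ hg] at hc
  exact hc (Finset.dvd_sum fun i hi => (hall i (Finset.mem_range.1 hi)).mul_right _)

lemma not_C_dvd_of_monic_sum_mul_pow {π : R} (hπ : ¬ IsUnit π) (hφ : φ.Monic)
    {n : ℕ} {b : ℕ → R[X]} (hb : ∀ i < n, (b i).degree < φ.degree) (hbn : b n ≠ 0)
    (hmonic : (∑ i ∈ Finset.range (n + 1), b i * φ ^ i).Monic) : ¬ C π ∣ b n := by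
  have hlead : (b n).Monic := (leadingCoeff_sum_mul_pow hφ hb hbn).symm.trans hmonic
  rwa [hlead.C_dvd_iff_isUnit]

end Expansion

section LastContact

/-- `I` is the last index whose point `(I, v I)` lies on the supporting line of slope `-1/k` of the
points `(i, v i)`. The line of that slope through `(i, v i)` meets the vertical axis at height
`v i + i / k`, which is scaled by `k` to stay integral; `v i = ⊤` stands for a missing point. -/
structure IsLastContact (k : ℕ) (v : ℕ → ℕ∞) (I : ℕ) : Prop where
  le : ∀ i, k * v I + I ≤ k * v i + i
  lt : ∀ i, I < i → k * v I + I < k * v i + i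

variable {k : ℕ} {v w : ℕ → ℕ∞} {I J : ℕ}

lemma exists_isLastContact (k : ℕ) {s : ℕ} (hs : v s ≠ ⊤) : ∃ I, IsLastContact k v I := by
  let W : ℕ → ℕ∞ := fun i => k * v i + i
  let m := Function.argmin W
  have hmin : ∀ i, W m ≤ W i := fun i => Function.argmin_le W i
  have hWs : W s < ⊤ :=
    ENat.add_lt_top.2
      ⟨WithTop.mul_lt_top (ENat.natCast_lt_top k) hs.lt_top, ENat.natCast_lt_top s⟩
  obtain ⟨M, hM⟩ := ENat.ne_top_iff_exists.1 ((hmin s).trans_lt hWs).ne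
  have hfin : {i | W i ≤ W m}.Finite := by
    refine (Set.finite_Iic M).subset fun i (hi : W i ≤ W m) => ?_
    have hiM : (i : ℕ∞) ≤ M := hM ▸ le_add_self.trans hi
    exact_mod_cast hiM
  obtain ⟨I, hI : W I ≤ W m, hImax⟩ := hfin.exists_maximal ⟨m, le_refl (W m)⟩
  refine ⟨I, fun i => hI.trans (hmin i), fun i hIi => hI.trans_lt ?_⟩
  by_contra! hi
  exact hIi.not_ge (hImax hi hIi.le)

lemma IsLastContact.ne_top (hI : IsLastContact k v I) (hk : k ≠ 0) : v I ≠ ⊤ := by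
  intro htop
  have hlt := (hI.lt (I + 1) I.lt_succ_self).ne_top
  rw [htop, ENat.mul_top (by exact_mod_cast hk), top_add] at hlt
  exact hlt rfl

lemma IsLastContact.ne_zero (hI : IsLastContact k v I) (hv : v 0 ≠ 0) {s : ℕ} (hs : v s = 0)
    (hsk : s ≤ k) : I ≠ 0 := by
  rintro rfl
  have hs0 : 0 < s := Nat.pos_of_ne_zero fun h => hv (h ▸ hs)
  refine (hI.lt s hs0).not_ge ?_
  calc (k : ℕ∞) * v s + s = s := by rw [hs, mul_zero, zero_add]
    _ ≤ k := by exact_mod_cast hsk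
    _ ≤ k * v 0 := le_mul_of_one_le_right' (Order.one_le_iff_ne_zero.2 hv)
    _ ≤ k * v 0 + (0 : ℕ) := le_self_add

lemma IsLastContact.add_lt_add (hI : IsLastContact k v I) (hJ : IsLastContact k w J) (hk : k ≠ 0)
    {i j : ℕ} (hne : (i, j) ≠ (I, J)) (hij : i + j ≤ I + J) : v I + w J < v i + w j := by
  by_contra! hle
  have hfin : v i + w j ≠ ⊤ :=
    (hle.trans_lt (ENat.add_lt_top.2 ⟨(hI.ne_top hk).lt_top, (hJ.ne_top hk).lt_top⟩)).ne
  have hIle := hI.le i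
  have hIlt := hI.lt i
  have hJle := hJ.le j
  have hJlt := hJ.lt j
  lift v I to ℕ using hI.ne_top hk with a
  lift w J to ℕ using hJ.ne_top hk with b
  lift v i to ℕ using fun h => hfin (by simp [h]) with c
  lift w j to ℕ using fun h => hfin (by simp [h]) with d
  norm_cast at *
  have hkle := Nat.mul_le_mul_left k hle
  rw [mul_add, mul_add] at hkle
  grind

end LastContact

lemma lt_emultiplicity_sum {ι R : Type*} [CommSemiring R] {c : R} {A : ℕ∞} (hA : A ≠ ⊤)
    {s : Finset ι} {f : ι → R} (hf : ∀ x ∈ s, A < emultiplicity c (f x)) :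
    A < emultiplicity c (∑ x ∈ s, f x) := by
  lift A to ℕ using hA
  refine (ENat.add_one_le_iff (ENat.natCast_ne_top A)).1 ?_
  exact_mod_cast le_emultiplicity_of_pow_dvd (Finset.dvd_sum fun x hx =>
    pow_dvd_of_le_emultiplicity (by exact_mod_cast Order.add_one_le_of_lt (hf x hx)))

section Residue

variable {R S : Type*} [CommRing R] [CommRing S] {σ : R →+* S} {π : R} {φ : R[X]}

lemma map_eq_zero_iff_C_dvd (hσ : RingHom.ker σ = Ideal.span {π}) (g : R[X]) :
    g.map σ = 0 ↔ C π ∣ g := by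
  rw [← coe_mapRingHom, ← RingHom.mem_ker, ker_mapRingHom, hσ, Ideal.map_span,
    Set.image_singleton, Ideal.mem_span_singleton]

lemma C_dvd_modByMonic_iff (hσ : RingHom.ker σ = Ideal.span {π}) (hφ : φ.Monic) (g : R[X]) :
    C π ∣ g %ₘ φ ↔ φ.map σ ∣ g.map σ := by
  rw [← map_eq_zero_iff_C_dvd hσ, map_modByMonic _ hφ, modByMonic_eq_zero_iff_dvd (hφ.map σ)]

lemma not_map_dvd_map_of_degree_lt (hσ : RingHom.ker σ = Ideal.span {π}) (hφ : φ.Monic)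
    {u : R[X]} (hu : ¬ C π ∣ u) (hdeg : u.degree < φ.degree) : ¬ φ.map σ ∣ u.map σ := by
  have hne : u.map σ ≠ 0 := mt (map_eq_zero_iff_C_dvd hσ u).1 hu
  have : Nontrivial S := nontrivial_of_ne _ _ (leadingCoeff_ne_zero.2 hne)
  refine (hφ.map σ).not_dvd_of_degree_lt hne ?_
  rw [hφ.degree_map]
  exact degree_map_le.trans_lt hdeg

lemma map_pow_dvd_map_sum_mul_pow (hσ : RingHom.ker σ = Ideal.span {π}) {b : ℕ → R[X]} {r : ℕ}
    (hb : ∀ i < r, C π ∣ b i) (N : ℕ) :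
    φ.map σ ^ r ∣ (∑ i ∈ Finset.range N, b i * φ ^ i).map σ := by
  rw [Polynomial.map_sum]
  refine Finset.dvd_sum fun i _ => ?_
  rw [Polynomial.map_mul, Polynomial.map_pow]
  rcases lt_or_ge i r with hir | hri
  · rw [(map_eq_zero_iff_C_dvd hσ _).2 (hb i hir), zero_mul]
    exact dvd_zero _
  · exact (pow_dvd_pow _ hri).mul_left _

lemma prime_C_of_ker_eq_span [IsDomain S] (hπ : π ≠ 0) (hσ : RingHom.ker σ = Ideal.span {π}) :
    Prime (C π) := by
  rw [prime_C_iff, ← Ideal.span_singleton_prime hπ, ← hσ]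
  exact RingHom.ker_isPrime σ

lemma dvd_of_pow_dvd_mul_of_natDegree_lt [IsDomain R] {P a b : R[X]} (hP : Prime P) {r : ℕ}
    (hdvd : P ^ r ∣ a * b) (hb : b ≠ 0) (hdeg : b.natDegree < r * P.natDegree) : P ∣ a := by
  by_contra hPa
  have hle := natDegree_le_of_dvd (hP.pow_dvd_of_dvd_mul_left r hPa hdvd) hb
  rw [natDegree_pow] at hle
  exact hle.not_gt hdeg

lemma not_C_dvd_mul_modByMonic (hσ : RingHom.ker σ = Ideal.span {π}) (hφ : φ.Monic)
    (hφσ : Prime (φ.map σ)) {u w : R[X]} (hu : ¬ C π ∣ u) (hw : ¬ C π ∣ w)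
    (hudeg : u.degree < φ.degree) (hwdeg : w.degree < φ.degree) : ¬ C π ∣ (u * w) %ₘ φ := by
  rw [C_dvd_modByMonic_iff hσ hφ, Polynomial.map_mul, hφσ.dvd_mul, not_or]
  exact ⟨not_map_dvd_map_of_degree_lt hσ hφ hu hudeg, not_map_dvd_map_of_degree_lt hσ hφ hw hwdeg⟩

variable [IsDomain R] [IsDomain S]

lemma emultiplicity_mul_modByMonic (hπ : π ≠ 0) (hσ : RingHom.ker σ = Ideal.span {π})
    (hφ : φ.Monic) (hφσ : Prime (φ.map σ)) {u w : R[X]} (hu : u.degree < φ.degree)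
    (hw : w.degree < φ.degree) :
    emultiplicity (C π) ((u * w) %ₘ φ) = emultiplicity (C π) u + emultiplicity (C π) w := by
  have hCπ := prime_C_of_ker_eq_span hπ hσ
  refine le_antisymm ?_ ?_
  · by_cases hfin : FiniteMultiplicity (C π) u ∧ FiniteMultiplicity (C π) w
    · obtain ⟨u', huu', hu'⟩ := hfin.1.exists_eq_pow_mul_and_not_dvd
      obtain ⟨w', hww', hw'⟩ := hfin.2.exists_eq_pow_mul_and_not_dvd
      have hu'deg := (degree_le_of_dvd (Dvd.intro_left _ huu'.symm) hfin.1.ne_zero).trans_lt hu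
      have hw'deg := (degree_le_of_dvd (Dvd.intro_left _ hww'.symm) hfin.2.ne_zero).trans_lt hw
      have hrem := not_C_dvd_mul_modByMonic hσ hφ hφσ hu' hw' hu'deg hw'deg
      set a := multiplicity (C π) u
      set b := multiplicity (C π) w
      have hpull : (u * w) %ₘ φ = C π ^ (a + b) * ((u' * w') %ₘ φ) := by
        rw [← C_pow, ← smul_eq_C_mul, ← smul_modByMonic, smul_eq_C_mul, C_pow, huu', hww']
        ring_nf
      rw [hpull, emultiplicity_mul hCπ, emultiplicity_eq_zero.2 hrem,
        emultiplicity_pow_self_of_prime hCπ, hfin.1.emultiplicity_eq_multiplicity,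
        hfin.2.emultiplicity_eq_multiplicity, add_zero, Nat.cast_add]
    · have htop : emultiplicity (C π) u + emultiplicity (C π) w = ⊤ := by
        simpa only [ENat.add_eq_top, emultiplicity_eq_top, not_and_or] using hfin
      exact htop ▸ le_top
  · rw [← emultiplicity_mul hCπ, ← expansionCoeff_zero]
    exact emultiplicity_le_emultiplicity_expansionCoeff π 0 (u * w)

lemma emultiplicity_expansionCoeff_zero_mul (hπ : π ≠ 0) (hσ : RingHom.ker σ = Ideal.span {π})
    (hφ : φ.Monic) (hφσ : Prime (φ.map σ)) (g h : R[X]) :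
    emultiplicity (C π) (expansionCoeff φ 0 (g * h)) =
      emultiplicity (C π) (expansionCoeff φ 0 g) + emultiplicity (C π) (expansionCoeff φ 0 h) := by
  rw [← emultiplicity_mul_modByMonic hπ hσ hφ hφσ (degree_expansionCoeff_lt hφ 0 g)
    (degree_expansionCoeff_lt hφ 0 h)]
  simp only [expansionCoeff_zero, ← mul_modByMonic]

lemma emultiplicity_expansionCoeff_add_mul (hπ : π ≠ 0) (hσ : RingHom.ker σ = Ideal.span {π})
    (hφ : φ.Monic) (hφσ : Prime (φ.map σ)) {k : ℕ} (hk : k ≠ 0) {g h : R[X]} {I J : ℕ}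
    (hI : IsLastContact k (fun i => emultiplicity (C π) (expansionCoeff φ i g)) I)
    (hJ : IsLastContact k (fun j => emultiplicity (C π) (expansionCoeff φ j h)) J) :
    emultiplicity (C π) (expansionCoeff φ (I + J) (g * h)) =
      emultiplicity (C π) (expansionCoeff φ I g) + emultiplicity (C π) (expansionCoeff φ J h) := by
  have hfin : emultiplicity (C π) (expansionCoeff φ I g) +
      emultiplicity (C π) (expansionCoeff φ J h) ≠ ⊤ :=
    WithTop.add_ne_top.2 ⟨hI.ne_top hk, hJ.ne_top hk⟩
  have hmain : emultiplicity (C π)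
      (expansionCoeff φ (I + J) (expansionCoeff φ I g * expansionCoeff φ J h * φ ^ (I + J))) =
        emultiplicity (C π) (expansionCoeff φ I g) +
          emultiplicity (C π) (expansionCoeff φ J h) := by
    rw [expansionCoeff_mul_pow_self hφ, emultiplicity_mul_modByMonic hπ hσ hφ hφσ
      (degree_expansionCoeff_lt hφ I g) (degree_expansionCoeff_lt hφ J h)]
  have hrest : ∀ x : ℕ × ℕ, x ≠ (I, J) → emultiplicity (C π) (expansionCoeff φ I g) +
      emultiplicity (C π) (expansionCoeff φ J h) < emultiplicity (C π) (expansionCoeff φ (I + J)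
        (expansionCoeff φ x.1 g * expansionCoeff φ x.2 h * φ ^ (x.1 + x.2))) := by
    rintro ⟨i, j⟩ hne
    rcases lt_or_ge (I + J) (i + j) with hlt | hge
    · rw [expansionCoeff_mul_pow_of_lt hφ hlt, emultiplicity_zero]
      exact hfin.lt_top
    · refine (hI.add_lt_add hJ hk hne hge).trans_le ?_
      rw [← emultiplicity_mul (prime_C_of_ker_eq_span hπ hσ)]
      exact (emultiplicity_le_emultiplicity_of_dvd_right (dvd_mul_right _ _)).trans
        (emultiplicity_le_emultiplicity_expansionCoeff π _ _)
  have hmem : (I, J) ∈ Finset.range (I + J + 1) ×ˢ Finset.range (I + J + 1) := by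
    simp only [Finset.mem_product, Finset.mem_range]
    omega
  rw [expansionCoeff_mul hφ, ← Finset.sum_erase_add _ _ hmem, emultiplicity_add_of_gt, hmain]
  rw [hmain]
  exact lt_emultiplicity_sum hfin fun x hx => hrest x (Finset.ne_of_mem_erase hx)

lemma exists_slope_ge_of_C_dvd_expansionCoeff_zero (hπ : π ≠ 0)
    (hσ : RingHom.ker σ = Ideal.span {π}) (hφ : φ.Monic) (hφσ : Prime (φ.map σ)) {k s t : ℕ}
    {g h : R[X]}
    (hg0 : C π ∣ expansionCoeff φ 0 g) (hsk : s ≤ k) (hgs : ¬ C π ∣ expansionCoeff φ s g)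
    (hht : ¬ C π ∣ expansionCoeff φ t h) :
    ∃ m, m ≠ 0 ∧ expansionCoeff φ m (g * h) ≠ 0 ∧
      k * emultiplicity (C π) (expansionCoeff φ m (g * h)) + m ≤
        k * emultiplicity (C π) (expansionCoeff φ 0 (g * h)) := by
  have hk : k ≠ 0 := by
    rintro rfl
    exact hgs (Nat.le_zero.1 hsk ▸ hg0)
  have hgs' := emultiplicity_eq_zero.2 hgs
  obtain ⟨I, hI⟩ := exists_isLastContact k
    (v := fun i => emultiplicity (C π) (expansionCoeff φ i g)) (s := s) (by simp [hgs'])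
  obtain ⟨J, hJ⟩ := exists_isLastContact k
    (v := fun j => emultiplicity (C π) (expansionCoeff φ j h)) (s := t)
    (by simp [emultiplicity_eq_zero.2 hht])
  have hI0 : I ≠ 0 := hI.ne_zero (emultiplicity_ne_zero.2 hg0) hgs' hsk
  have hadd := emultiplicity_expansionCoeff_add_mul hπ hσ hφ hφσ hk hI hJ
  refine ⟨I + J, by omega, fun hzero => ?_, ?_⟩
  · rw [hzero, emultiplicity_zero] at hadd
    exact WithTop.add_ne_top.2 ⟨hI.ne_top hk, hJ.ne_top hk⟩ hadd.symm
  · have hsum := add_le_add (hI.le 0) (hJ.le 0)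
    rw [hadd, emultiplicity_expansionCoeff_zero_mul hπ hσ hφ hφσ, Nat.cast_add, mul_add, mul_add,
      add_add_add_comm]
    simpa only [Nat.cast_zero, add_zero] using hsum

lemma map_dvd_map_of_mul_eq_sum_mul_pow (hσ : RingHom.ker σ = Ideal.span {π})
    (hφ : φ.Monic) (hφσ : Prime (φ.map σ)) {n ℓ : ℕ} {b : ℕ → R[X]}
    (hdeg : ∀ i ≤ n, (b i).degree < φ.degree) (hlow : ∀ i, i + ℓ < n → C π ∣ b i)
    {g h : R[X]} (hF : ∑ i ∈ Finset.range (n + 1), b i * φ ^ i = g * h)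
    (hh : ¬ C π ∣ h) (hℓg : (ℓ + 1) * φ.natDegree ≤ g.natDegree) : φ.map σ ∣ g.map σ := by
  rcases eq_or_ne g 0 with rfl | hg0
  · exact Polynomial.map_zero σ ▸ dvd_zero _
  have hpow : φ.map σ ^ (n - ℓ) ∣ g.map σ * h.map σ := by
    rw [← Polynomial.map_mul, ← hF]
    exact map_pow_dvd_map_sum_mul_pow hσ (fun i hi => hlow i (by omega)) (n + 1)
  have hh0 : h ≠ 0 := fun hzero => hh (hzero ▸ dvd_zero _)
  have hsum : g.natDegree + h.natDegree < (n + 1) * φ.natDegree := by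
    rw [← natDegree_mul hg0 hh0, ← natDegree_pow, ← hF]
    exact natDegree_lt_natDegree (hF ▸ mul_ne_zero hg0 hh0)
      (degree_sum_mul_pow_lt hφ fun i hi => hdeg i (Nat.lt_succ_iff.1 hi))
  refine dvd_of_pow_dvd_mul_of_natDegree_lt hφσ hpow (mt (map_eq_zero_iff_C_dvd hσ h).1 hh)
    (natDegree_map_le.trans_lt ?_)
  rw [add_mul] at hℓg hsum
  rw [hφ.natDegree_map, Nat.sub_mul]
  omega

lemma not_natDegree_between_of_dvd_sum_mul_pow (hπ : π ≠ 0) (hσ : RingHom.ker σ = Ideal.span {π})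
    (hφ : φ.Monic) (hφσ : Prime (φ.map σ)) {n k ℓ : ℕ} {b : ℕ → R[X]}
    (hdeg : ∀ i ≤ n, (b i).degree < φ.degree) (hlow : ∀ i, i + ℓ < n → C π ∣ b i)
    (hslope : ∀ j, 1 ≤ j → j ≤ n → b j ≠ 0 →
      k * emultiplicity (C π) (b 0) < k * emultiplicity (C π) (b j) + j)
    (hbn : ¬ C π ∣ b n) {g : R[X]} (hg : g ∣ ∑ i ∈ Finset.range (n + 1), b i * φ ^ i) :
    ¬ ((ℓ + 1) * φ.natDegree ≤ g.natDegree ∧ g.natDegree < (k + 1) * φ.natDegree) := by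
  rintro ⟨hℓg, hgk⟩
  obtain ⟨h, hF⟩ := hg
  have hcoeff : ∀ m, expansionCoeff φ m (g * h) = if m < n + 1 then b m else 0 :=
    hF ▸ expansionCoeff_sum_mul_pow hφ fun i hi => hdeg i (Nat.lt_succ_iff.1 hi)
  have hgh : ¬ C π ∣ g * h := fun hdvd => hbn <| by
    simpa only [hcoeff, if_pos n.lt_succ_self] using C_dvd_expansionCoeff (φ := φ) n hdvd
  have hh : ¬ C π ∣ h := fun hdvd => hgh (hdvd.mul_left g)
  have hφpos : 0 < φ.natDegree := Nat.pos_of_mul_pos_left (Nat.zero_lt_of_lt hgk)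
  obtain ⟨s, hsk, hgs⟩ :=
    exists_not_C_dvd_expansionCoeff hφ hgk fun hdvd => hgh (hdvd.mul_right h)
  obtain ⟨t, -, hht⟩ := exists_not_C_dvd_expansionCoeff hφ
    (h.natDegree.lt_succ_self.trans_le (Nat.le_mul_of_pos_right _ hφpos)) hh
  have hg0 : C π ∣ expansionCoeff φ 0 g := by
    rw [expansionCoeff_zero, C_dvd_modByMonic_iff hσ hφ]
    exact map_dvd_map_of_mul_eq_sum_mul_pow hσ hφ hφσ hdeg hlow hF hh hℓg
  obtain ⟨m, hm0, hm, hle⟩ :=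
    exists_slope_ge_of_C_dvd_expansionCoeff_zero hπ hσ hφ hφσ hg0 (Nat.lt_succ_iff.1 hsk) hgs hht
  have hmn : m < n + 1 := by
    by_contra hnm
    exact hm (by rw [hcoeff, if_neg hnm])
  rw [hcoeff, if_pos hmn] at hm hle
  rw [hcoeff, if_pos n.succ_pos] at hle
  exact (hslope m (Nat.one_le_iff_ne_zero.2 hm0) (Nat.lt_succ_iff.1 hmn) hm).not_ge hle

theorem filaseta_extension_general (hπ : π ≠ 0) (hσ : RingHom.ker σ = Ideal.span {π})
    (hφ : φ.Monic) (hφσ : Prime (φ.map σ)) {n k ℓ : ℕ} {fc a : ℕ → R[X]}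
    (hdeg : ∀ i ≤ n, (a i).degree + (fc i).degree < φ.degree)
    (hlow : ∀ i, i + ℓ < n → C π ∣ fc i)
    (hslope : ∀ j, 1 ≤ j → j ≤ n → fc j ≠ 0 →
      k * emultiplicity (C π) (fc 0) < k * emultiplicity (C π) (fc j) + j)
    (hfn : ¬ C π ∣ fc n) (ha0 : ¬ C π ∣ a 0) (han : ¬ C π ∣ a n) {g : R[X]}
    (hg : g ∣ ∑ i ∈ Finset.range (n + 1), a i * fc i * φ ^ i) :
    ¬ ((ℓ + 1) * φ.natDegree ≤ g.natDegree ∧ g.natDegree < (k + 1) * φ.natDegree) := by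
  have hCπ := prime_C_of_ker_eq_span hπ hσ
  refine not_natDegree_between_of_dvd_sum_mul_pow hπ hσ hφ hφσ (b := fun i => a i * fc i)
    (fun i hi => degree_mul.trans_lt (hdeg i hi)) (fun i hi => (hlow i hi).mul_left _)
    (fun j hj1 hjn hj => ?_) (hCπ.not_dvd_mul han hfn) hg
  calc (k : ℕ∞) * emultiplicity (C π) (a 0 * fc 0) = k * emultiplicity (C π) (fc 0) := by
        rw [emultiplicity_mul hCπ, emultiplicity_eq_zero.2 ha0, zero_add]
    _ < k * emultiplicity (C π) (fc j) + j := hslope j hj1 hjn (right_ne_zero_of_mul hj)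
    _ ≤ k * emultiplicity (C π) (a j * fc j) + j := by
        gcongr
        exact emultiplicity_le_emultiplicity_of_dvd_right (dvd_mul_left _ _)

end Residue

lemma emultiplicity_C_eq_vpx {p : ℕ} (hp : p.Prime) {g : ℤ[X]} (hg : g ≠ 0) :
    emultiplicity (C (p : ℤ)) g = vpx p g := by
  have hfin : FiniteMultiplicity (C (p : ℤ)) g :=
    FiniteMultiplicity.of_prime_left (prime_C_iff.2 (Nat.prime_iff_prime_int.1 hp)) hg
  have hset : {m : ℕ | ∀ j, (p : ℤ) ^ m ∣ g.coeff j} = Set.Iic (multiplicity (C (p : ℤ)) g) := by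
    ext m
    rw [Set.mem_ofPred_eq, Set.mem_Iic, ← hfin.pow_dvd_iff_le_multiplicity, ← C_pow,
      C_dvd_iff_dvd_coeff]
  rw [hfin.emultiplicity_eq_multiplicity, vpx, hset, csSup_Iic]

lemma mul_emultiplicity_lt_of_mul_vpx_sub_lt {p : ℕ} (hp : p.Prime) {u w : ℤ[X]}
    (hu : u ≠ 0) (hw : w ≠ 0) {k j : ℕ} (h : k * (vpx p u - vpx p w) < j) :
    k * emultiplicity (C (p : ℤ)) u < k * emultiplicity (C (p : ℤ)) w + j := by
  rw [emultiplicity_C_eq_vpx hp hu, emultiplicity_C_eq_vpx hp hw]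
  norm_cast
  calc k * vpx p u ≤ k * (vpx p w + (vpx p u - vpx p w)) := by gcongr; exact le_add_tsub
    _ = k * vpx p w + k * (vpx p u - vpx p w) := mul_add ..
    _ < k * vpx p w + j := by gcongr

/-- Extension of a lemma of Filaseta. Let `0 ≤ ℓ < k ≤ n/2`, `p` prime, `φ ∈ ℤ[x]` monic
and irreducible mod `p`, and `f ∈ ℤ[x]` monic, not divisible by `φ`, with `φ`-expansion
`f = ∑_{i≤n} (fc i)·φ^i`, `fc n ≠ 0`. Assume `p` divides every coefficient of `fc i` for
`i ≤ n-ℓ-1`, and the right-most edge of the `φ`-Newton polygon of `f` has slope `< 1/k`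
(i.e. `k·(v_p^x(fc 0) - v_p^x(fc j)) < j` for all `1 ≤ j ≤ n` with `fc j ≠ 0`). If the
`a i` satisfy `deg (a i) < deg φ - deg (fc i)`, `p` does not divide the content of `a 0`,
and `p` does not divide the leading coefficient of `a n`, then `∑_{i≤n} (a i)·(fc i)·φ^i`
has no factor in `ℤ[x]` of degree in `[(ℓ+1)·deg φ, (k+1)·deg φ)`. -/
theorem filaseta_extension (n k ℓ p : ℕ) (hp : p.Prime)
    (hℓk : ℓ < k) (hk : 2 * k ≤ n)
    (φ : ℤ[X]) (hφmonic : φ.Monic)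
    (hφirr : Irreducible (φ.map (Int.castRingHom (ZMod p))))
    (f : ℤ[X]) (hfmonic : f.Monic) (hφf : ¬ φ ∣ f)
    (fc : ℕ → ℤ[X])
    (hexp : f = ∑ i ∈ Finset.range (n + 1), fc i * φ ^ i)
    (hdegfc : ∀ i, (fc i).degree < φ.degree)
    (hfn : fc n ≠ 0)
    (h1 : ∀ i ≤ n - ℓ - 1, ∀ j, (p : ℤ) ∣ (fc i).coeff j)
    (hf0 : fc 0 ≠ 0)
    (h2 : ∀ j, 1 ≤ j → j ≤ n → fc j ≠ 0 → k * (vpx p (fc 0) - vpx p (fc j)) < j)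
    (a : ℕ → ℤ[X])
    (hadeg : ∀ i ≤ n, (a i).degree + (fc i).degree < φ.degree)
    (ha0 : ¬ (p : ℤ) ∣ (a 0).content)
    (han : ¬ (p : ℤ) ∣ (a n).leadingCoeff) :
    ∀ g : ℤ[X], g ∣ (∑ i ∈ Finset.range (n + 1), a i * fc i * φ ^ i) →
      ¬ ((ℓ + 1) * φ.natDegree ≤ g.natDegree ∧
         g.natDegree < (k + 1) * φ.natDegree) := by
  have := Fact.mk hp
  have hpu : ¬ IsUnit (p : ℤ) := (Nat.prime_iff_prime_int.1 hp).not_isUnit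
  exact fun g hg => filaseta_extension_general (Nat.cast_ne_zero.2 hp.ne_zero)
    (ZMod.ker_intCastRingHom p) hφmonic hφirr.prime hadeg
    (fun i hi => (C_dvd_iff_dvd_coeff _ _).2 (h1 i (by omega)))
    (fun j hj1 hjn hj => mul_emultiplicity_lt_of_mul_vpx_sub_lt hp hf0 hj (h2 j hj1 hjn hj))
    (not_C_dvd_of_monic_sum_mul_pow hpu hφmonic (fun i _ => hdegfc i) hfn (hexp ▸ hfmonic))
    (mt dvd_content_iff_C_dvd.2 ha0) (fun hdvd => han ((C_dvd_iff_dvd_coeff _ _).1 hdvd _)) hg
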